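/- Continuous simple iterations method. Let H be a real Hilbert space, u₀ ∈ H, R > 0, B := {u ∈ H : ‖u − u₀‖ ≤ R}, and let F : H → H be twice Fréchet differentiable with ‖F″(u)‖ ≤ M₂ for all u ∈ B. Assume there is a constant c₁ > 0 such that ⟨F′(u)h, h⟩ ≥ c₁‖h‖² for all u ∈ B and all h ∈ H, and that c₁^{−1}·‖F(u₀)‖ ≤ R. Then the Cauchy problem u̇(t) = −F(u(t)), u(0) = u₀ has a global solution u with u(t) ∈ B for all t ≥ 0; the strong limit y := lim_{t→∞} u(t) exists; F(y) = 0; and for all t ≥ 0: ‖F(u(t))‖ ≤ ‖F(u₀)‖·e^{−c₁ t} and ‖u(t) − y‖ ≤ c₁^{−1}·‖F(u₀)‖·e^{−c₁ t}. -/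

import Mathlib

open MeasureTheory Filter
open scoped RealInnerProductSpace

/-!
By the mean value theorem the bound on `F''` makes `F` Lipschitz on the ball, and the lower bound
on `F'` makes it strongly monotone there. Composing `F` with a Lipschitz retraction onto the ball
gives a bounded, globally Lipschitz field, hence a global solution, and it cannot leave the ball
because strong monotonicity and `‖F u₀‖ ≤ c R` keep `-F` from pointing outwards on the sphere.
Strong monotonicity also makes the flow of `-F` contract distances like `exp (-c t)`. Comparing a
solution with its own time shifts and differentiating gives `‖F (u t)‖ ≤ ‖F u₀‖ exp (-c t)`; since
`c ‖x - y‖ ≤ ‖F x - F y‖`, this decay forces `u t` to converge to a zero of `F` at the same rate.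
-/

theorem isBounded_image_of_lipschitzOnWith {α β : Type*} [PseudoMetricSpace α]
    [PseudoMetricSpace β] {f : α → β} {s : Set α} {K : NNReal} (hf : LipschitzOnWith K f s)
    (hs : Bornology.IsBounded s) : Bornology.IsBounded (f '' s) := by
  obtain ⟨C, hC⟩ := Metric.isBounded_iff.1 hs
  refine Metric.isBounded_iff.2 ⟨K * C, ?_⟩
  rintro _ ⟨x, hx, rfl⟩ _ ⟨y, hy, rfl⟩
  exact (hf.dist_le_mul x hx y hy).trans (mul_le_mul_of_nonneg_left (hC hx hy) K.coe_nonneg)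

theorem exists_lipschitzOnWith_of_norm_second_hasFDerivWithinAt_le {E G : Type*}
    [NormedAddCommGroup E] [NormedSpace ℝ E] [NormedAddCommGroup G] [NormedSpace ℝ G]
    {f : E → G} {f' : E → E →L[ℝ] G} {f'' : E → E →L[ℝ] E →L[ℝ] G} {s : Set E} {M : ℝ}
    (hs : Convex ℝ s) (hbdd : Bornology.IsBounded s)
    (hf : ∀ x ∈ s, HasFDerivWithinAt f (f' x) s x)
    (hf' : ∀ x ∈ s, HasFDerivWithinAt f' (f'' x) s x) (hM : ∀ x ∈ s, ‖f'' x‖ ≤ M) :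
    ∃ K, LipschitzOnWith K f s := by
  have hf'_lip : LipschitzOnWith M.toNNReal f' s :=
    hs.lipschitzOnWith_of_nnnorm_hasFDerivWithin_le hf' fun x hx ↦
      NNReal.le_toNNReal_of_coe_le (hM x hx)
  obtain ⟨C, hC⟩ := isBounded_iff_forall_norm_le.1
    (isBounded_image_of_lipschitzOnWith hf'_lip hbdd)
  exact ⟨C.toNNReal, hs.lipschitzOnWith_of_nnnorm_hasFDerivWithin_le hf fun x hx ↦
    NNReal.le_toNNReal_of_coe_le (hC _ ⟨x, hx, rfl⟩)⟩

theorem norm_le_mul_norm_of_hasDerivWithinAt_Ici {E G : Type*} [NormedAddCommGroup E]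
    [NormedSpace ℝ E] [NormedAddCommGroup G] [NormedSpace ℝ G] {f : ℝ → E} {g : ℝ → G} {f' : E}
    {g' : G} {a C : ℝ} (hf : HasDerivWithinAt f f' (Set.Ici a) a)
    (hg : HasDerivWithinAt g g' (Set.Ici a) a) (h : ∀ t > a, ‖f t - f a‖ ≤ C * ‖g t - g a‖) :
    ‖f'‖ ≤ C * ‖g'‖ := by
  have hf_slope := (hasDerivWithinAt_iff_tendsto_slope' Set.self_notMem_Ioi).1 hf.Ioi_of_Ici
  have hg_slope := (hasDerivWithinAt_iff_tendsto_slope' Set.self_notMem_Ioi).1 hg.Ioi_of_Ici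
  refine le_of_tendsto_of_tendsto hf_slope.norm (hg_slope.norm.const_mul C) ?_
  filter_upwards [self_mem_nhdsWithin] with t ht
  rw [slope_def_module, slope_def_module, norm_smul, norm_smul, mul_left_comm]
  exact mul_le_mul_of_nonneg_left (h t ht) (norm_nonneg _)

section IntegralCurves

open Set Metric
open scoped NNReal

variable {E : Type*} [NormedAddCommGroup E] [NormedSpace ℝ E]
  {v : ℝ → E → E} {K L : ℝ≥0} {t₀ : ℝ}

theorem eqOn_ball_of_isIntegralCurveOn (hv : ∀ t, LipschitzWith K (v t)) {α β : ℝ → E} {r r' : ℝ}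
    (hα : IsIntegralCurveOn α v (ball t₀ r)) (hβ : IsIntegralCurveOn β v (ball t₀ r'))
    (h₀ : α t₀ = β t₀) : EqOn α β (ball t₀ r ∩ ball t₀ r') := by
  intro t ht
  have ht₀ : t₀ ∈ ball t₀ (min r r') :=
    mem_ball_self (dist_nonneg.trans_lt (lt_min ht.1 ht.2))
  have hasDerivAt_of_mem {γ : ℝ → E} {ρ : ℝ} (hγ : IsIntegralCurveOn γ v (ball t₀ ρ))
      (hρ : min r r' ≤ ρ) : ∀ s ∈ ball t₀ (min r r'), HasDerivAt γ (v s (γ s)) s ∧ γ s ∈ univ :=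
    fun s hs ↦ ⟨(hγ s (ball_subset_ball hρ hs)).hasDerivAt
      (isOpen_ball.mem_nhds (ball_subset_ball hρ hs)), mem_univ _⟩
  have hα' := hasDerivAt_of_mem hα (min_le_left r r')
  have hβ' := hasDerivAt_of_mem hβ (min_le_right r r')
  have ht' : t ∈ ball t₀ (min r r') := mem_ball.2 (lt_min ht.1 ht.2)
  rw [Real.ball_eq_Ioo] at ht₀ ht' hα' hβ'
  exact ODE_solution_unique_of_mem_Ioo (fun s _ ↦ (hv s).lipschitzOnWith) ht₀ hα' hβ' h₀ ht'

theorem exists_isIntegralCurve_of_forall_ball (hv : ∀ t, LipschitzWith K (v t)) {x₀ : E}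
    (h : ∀ r : ℝ, ∃ α : ℝ → E, α t₀ = x₀ ∧ IsIntegralCurveOn α v (ball t₀ r)) :
    ∃ u : ℝ → E, u t₀ = x₀ ∧ IsIntegralCurve u v := by
  choose α hα₀ hα using h
  have eqOn_ball (r : ℝ) : EqOn (fun t ↦ α (dist t t₀ + 1) t) (α r) (ball t₀ r) := fun t ht ↦
    eqOn_ball_of_isIntegralCurveOn hv (hα _) (hα r) (by rw [hα₀, hα₀]) ⟨lt_add_one (dist t t₀), ht⟩
  refine ⟨fun t ↦ α (dist t t₀ + 1) t, hα₀ _, fun t ↦ ?_⟩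
  have ht : ball t₀ (dist t t₀ + 1) ∈ nhds t := isOpen_ball.mem_nhds (lt_add_one (dist t t₀))
  exact ((hα _ t (mem_of_mem_nhds ht)).hasDerivAt ht).congr_of_eventuallyEq
    ((eqOn_ball _).eventuallyEq_of_mem ht)

variable [CompleteSpace E]

theorem exists_isIntegralCurveOn_ball (hv : ∀ t, LipschitzWith K (v t))
    (hcont : ∀ x, Continuous fun t ↦ v t x) (hbound : ∀ t x, ‖v t x‖ ≤ L) (t₀ : ℝ) (x₀ : E)
    (r : ℝ) : ∃ α : ℝ → E, α t₀ = x₀ ∧ IsIntegralCurveOn α v (ball t₀ r) := by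
  have ht₀ : t₀ ∈ Icc (t₀ - |r|) (t₀ + |r|) := by simp
  have hPL : IsPicardLindelof v ⟨t₀, ht₀⟩ x₀ (L * ‖r‖₊) 0 L K :=
    { lipschitzOnWith := fun t _ ↦ (hv t).lipschitzOnWith
      continuousOn := fun x _ ↦ (hcont x).continuousOn
      norm_le := fun t _ x _ ↦ hbound t x
      mul_max_le := by simp }
  obtain ⟨α, hα₀, hα⟩ := hPL.exists_eq_forall_mem_Icc_hasDerivWithinAt₀
  rw [← Real.closedBall_eq_Icc] at hα
  exact ⟨α, hα₀, IsIntegralCurveOn.mono hα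
    ((ball_subset_ball (le_abs_self r)).trans ball_subset_closedBall)⟩

theorem exists_isIntegralCurve_of_lipschitzWith_of_norm_le (hv : ∀ t, LipschitzWith K (v t))
    (hcont : ∀ x, Continuous fun t ↦ v t x) (hbound : ∀ t x, ‖v t x‖ ≤ L) (t₀ : ℝ) (x₀ : E) :
    ∃ u : ℝ → E, u t₀ = x₀ ∧ IsIntegralCurve u v :=
  exists_isIntegralCurve_of_forall_ball hv (exists_isIntegralCurveOn_ball hv hcont hbound t₀ x₀)

end IntegralCurves

section RadialRetraction

open Metric

variable {E : Type*} [NormedAddCommGroup E] [NormedSpace ℝ E] {x₀ x : E} {R : ℝ}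

/-- The radial retraction of a normed space onto `Metric.closedBall x₀ R`, used to extend a vector
field from the ball to the whole space. The single formula covers points inside and outside the
ball. -/
noncomputable def radialRetraction (x₀ : E) (R : ℝ) (x : E) : E :=
  x₀ + (R / max R ‖x - x₀‖) • (x - x₀)

namespace radialRetraction

theorem sub_center (x₀ : E) (R : ℝ) (x : E) :
    radialRetraction x₀ R x - x₀ = (R / max R ‖x - x₀‖) • (x - x₀) :=
  add_sub_cancel_left _ _

theorem norm_sub_center (hR : 0 ≤ R) (x : E) :
    ‖radialRetraction x₀ R x - x₀‖ = R / max R ‖x - x₀‖ * ‖x - x₀‖ := by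
  rw [sub_center, norm_smul, Real.norm_of_nonneg (div_nonneg hR (hR.trans (le_max_left _ _)))]

theorem mem_closedBall (hR : 0 ≤ R) (x : E) : radialRetraction x₀ R x ∈ closedBall x₀ R := by
  rw [mem_closedBall_iff_norm, norm_sub_center hR, div_mul_eq_mul_div, mul_div_assoc]
  exact mul_le_of_le_one_right hR
    (div_le_one_of_le₀ (le_max_right _ _) (hR.trans (le_max_left _ _)))

theorem mem_sphere (hR : 0 ≤ R) (hx : x ∉ closedBall x₀ R) :
    radialRetraction x₀ R x ∈ sphere x₀ R := by
  rw [mem_closedBall_iff_norm, not_le] at hx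
  rw [mem_sphere_iff_norm, norm_sub_center hR, max_eq_right hx.le,
    div_mul_cancel₀ _ (hR.trans_lt hx).ne']

theorem eq_self (hR : 0 < R) (hx : x ∈ closedBall x₀ R) : radialRetraction x₀ R x = x := by
  rw [radialRetraction, max_eq_left (mem_closedBall_iff_norm.1 hx), div_self hR.ne', one_smul,
    add_sub_cancel]

theorem lipschitzWith (hR : 0 < R) : LipschitzWith 2 (radialRetraction x₀ R) := by
  refine LipschitzWith.of_dist_le_mul fun x y ↦ ?_
  rw [dist_eq_norm, dist_eq_norm]
  set m := max R ‖x - x₀‖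
  set n := max R ‖y - x₀‖
  have hm : 0 < m := lt_max_of_lt_left hR
  have hn : 0 < n := lt_max_of_lt_left hR
  have factor : radialRetraction x₀ R x - radialRetraction x₀ R y =
      (R / m) • ((x - y) + ((n - m) / n) • (y - x₀)) := by
    change x₀ + (R / m) • (x - x₀) - (x₀ + (R / n) • (y - x₀)) = _
    match_scalars <;> field_simp <;> ring
  have norm_div_le : ‖R / m‖ ≤ 1 := by
    rw [Real.norm_of_nonneg (by positivity)]
    exact div_le_one_of_le₀ (le_max_left _ _) hm.le
  have abs_sub_le : |n - m| ≤ ‖x - y‖ := by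
    refine (abs_max_sub_max_le_max R ‖y - x₀‖ R ‖x - x₀‖).trans (max_le (by simp) ?_)
    simpa [norm_sub_rev] using abs_norm_sub_norm_le (y - x₀) (x - x₀)
  have norm_second_le : ‖((n - m) / n) • (y - x₀)‖ ≤ ‖x - y‖ := by
    rw [norm_smul, norm_div, Real.norm_of_nonneg hn.le, div_mul_eq_mul_div, mul_div_assoc]
    exact (mul_le_of_le_one_right (norm_nonneg _)
      (div_le_one_of_le₀ (le_max_right _ _) hn.le)).trans abs_sub_le
  calc ‖radialRetraction x₀ R x - radialRetraction x₀ R y‖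
      = ‖R / m‖ * ‖(x - y) + ((n - m) / n) • (y - x₀)‖ := by rw [factor, norm_smul]
    _ ≤ 1 * (‖x - y‖ + ‖x - y‖) := by
        gcongr
        exact (norm_add_le _ _).trans (by gcongr)
    _ = (2 : NNReal) * ‖x - y‖ := by push_cast; ring

end radialRetraction

end RadialRetraction

section InvariantBall

open Set Metric

theorem le_of_hasDerivWithinAt_nonpos_of_lt {f f' : ℝ → ℝ} {a M : ℝ}
    (hf : ∀ t ∈ Ici a, HasDerivWithinAt f (f' t) (Ici a) t) (ha : f a ≤ M)
    (hf' : ∀ t ∈ Ici a, M < f t → f' t ≤ 0) {t : ℝ} (ht : t ∈ Ici a) : f t ≤ M := by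
  have le_add (ε : ℝ) (hε : 0 < ε) : f t ≤ M + ε * (1 + (t - a)) := by
    refine image_le_of_deriv_right_lt_deriv_boundary' (B := fun s ↦ M + ε * (1 + (s - a)))
      (B' := fun _ ↦ ε) (a := a) (b := t)
      (fun s hs ↦ (hf s hs.1).continuousWithinAt.mono Icc_subset_Ici_self)
      (fun s hs ↦ (hf s hs.1).mono (Ici_subset_Ici.2 hs.1)) (by linarith [sub_self a])
      (by fun_prop) (fun s _ ↦ ?_) (fun s hs heq ↦ ?_) (right_mem_Icc.2 ht)
    · simpa using ((((hasDerivAt_id s).sub_const a).const_add 1).const_mul ε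
        |>.const_add M).hasDerivWithinAt
    · have : 0 < ε * (1 + (s - a)) := mul_pos hε (by linarith [hs.1])
      exact (hf' s hs.1 (by linarith)).trans_lt hε
  have hpos : 0 < 1 + (t - a) := by linarith [mem_Ici.1 ht]
  refine le_of_forall_pos_le_add fun ε hε ↦ ?_
  simpa [div_mul_cancel₀ ε hpos.ne'] using le_add (ε / (1 + (t - a))) (div_pos hε hpos)

variable {H : Type*} [NormedAddCommGroup H] [InnerProductSpace ℝ H] {x₀ : H} {R : ℝ}

theorem mapsTo_closedBall_of_isIntegralCurveOn {v : ℝ → H → H} {u : ℝ → H} {t₀ : ℝ}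
    (hu : IsIntegralCurveOn u v (Ici t₀)) (hu₀ : u t₀ ∈ closedBall x₀ R)
    (hv : ∀ t ∈ Ici t₀, ∀ x ∉ closedBall x₀ R, ⟪x - x₀, v t x⟫ ≤ 0) :
    MapsTo u (Ici t₀) (closedBall x₀ R) := by
  have hR : 0 ≤ R := nonempty_closedBall.1 ⟨_, hu₀⟩
  have mem_iff (x : H) : x ∈ closedBall x₀ R ↔ ‖x - x₀‖ ^ 2 ≤ R ^ 2 := by
    rw [mem_closedBall_iff_norm, sq_le_sq₀ (norm_nonneg _) hR]
  intro t ht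
  rw [mem_iff] at hu₀ ⊢
  refine le_of_hasDerivWithinAt_nonpos_of_lt (fun s hs ↦ ((hu s hs).sub_const x₀).norm_sq) hu₀
    (fun s hs hlt ↦ ?_) ht
  have := hv s hs (u s) (by rwa [mem_iff, not_le])
  linarith

theorem exists_hasDerivAt_mem_closedBall [CompleteSpace H] {f : H → H} {K : NNReal} (hR : 0 < R)
    (hf : LipschitzOnWith K f (closedBall x₀ R))
    (hin : ∀ x ∈ sphere x₀ R, ⟪x - x₀, f x⟫ ≤ 0) {x₁ : H} (hx₁ : x₁ ∈ closedBall x₀ R) :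
    ∃ u : ℝ → H, u 0 = x₁ ∧
      ∀ t ≥ (0 : ℝ), HasDerivAt u (f (u t)) t ∧ u t ∈ closedBall x₀ R := by
  set P := radialRetraction x₀ R
  have hPmem : ∀ x, P x ∈ closedBall x₀ R := radialRetraction.mem_closedBall hR.le
  have lipschitzWith_comp : LipschitzWith (K * 2) (f ∘ P) := lipschitzOnWith_univ.1 <|
    hf.comp (radialRetraction.lipschitzWith hR).lipschitzOnWith fun x _ ↦ hPmem x
  obtain ⟨L, hL⟩ : ∃ L : NNReal, ∀ x, ‖f (P x)‖ ≤ L := by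
    obtain ⟨L, hL⟩ := isBounded_iff_forall_norm_le.1
      (isBounded_image_of_lipschitzOnWith hf isBounded_closedBall)
    exact ⟨L.toNNReal, fun x ↦ (hL _ ⟨_, hPmem x, rfl⟩).trans (Real.le_coe_toNNReal L)⟩
  obtain ⟨u, hu₀, hu⟩ := exists_isIntegralCurve_of_lipschitzWith_of_norm_le
    (fun _ ↦ lipschitzWith_comp) (fun _ ↦ continuous_const) (fun _ ↦ hL) 0 x₁
  have inner_nonpos (x : H) (hx : x ∉ closedBall x₀ R) : ⟪x - x₀, f (P x)⟫ ≤ 0 := by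
    have h := hin _ (radialRetraction.mem_sphere hR.le hx)
    rw [radialRetraction.sub_center, real_inner_smul_left] at h
    exact nonpos_of_mul_nonpos_right h (div_pos hR (lt_max_of_lt_left hR))
  have hmem := mapsTo_closedBall_of_isIntegralCurveOn (hu.isIntegralCurveOn (Ici 0))
    (hu₀ ▸ hx₁) fun _ _ ↦ inner_nonpos
  refine ⟨u, hu₀, fun t ht ↦ ⟨?_, hmem ht⟩⟩
  simpa only [Function.comp_apply, P, radialRetraction.eq_self hR (hmem ht)] using hu t

end InvariantBall

section StronglyMonotone

open Set

variable {H : Type*} [NormedAddCommGroup H] [InnerProductSpace ℝ H]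

/-- `F` is strongly monotone on `s` with modulus `c`: the derivative-free form of the lower bound
on `F'`, from which all decay estimates follow. The sign of `c` is left free. -/
def StronglyMonotoneOn (c : ℝ) (F : H → H) (s : Set H) : Prop :=
  ∀ x ∈ s, ∀ y ∈ s, c * ‖x - y‖ ^ 2 ≤ ⟪F x - F y, x - y⟫

theorem stronglyMonotoneOn_of_hasFDerivWithinAt {F : H → H} {F' : H → H →L[ℝ] H} {s : Set H}
    {c : ℝ} (hs : Convex ℝ s) (hF : ∀ x ∈ s, HasFDerivWithinAt F (F' x) s x)
    (hF' : ∀ x ∈ s, ∀ h, c * ‖h‖ ^ 2 ≤ ⟪F' x h, h⟫) : StronglyMonotoneOn c F s := by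
  intro x hx y hy
  obtain ⟨z, hz, hmean⟩ := domain_mvt (f := fun z ↦ ⟪x - y, F z⟫)
    (fun z hz ↦ (innerSL ℝ (x - y)).hasFDerivAt.comp_hasFDerivWithinAt z (hF z hz)) hs hy hx
  calc c * ‖x - y‖ ^ 2
      ≤ ⟪F' z (x - y), x - y⟫ := hF' z (hs.segment_subset hy hx hz) _
    _ = ⟪F x - F y, x - y⟫ := by
        rw [real_inner_comm, real_inner_comm (x - y), inner_sub_right, hmean]
        rfl

namespace StronglyMonotoneOn

variable {F : H → H} {s : Set H} {c : ℝ}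

theorem mul_norm_sub_le (hF : StronglyMonotoneOn c F s) {x y : H} (hx : x ∈ s) (hy : y ∈ s) :
    c * ‖x - y‖ ≤ ‖F x - F y‖ := by
  rcases eq_or_ne x y with rfl | hxy
  · simp
  refine le_of_mul_le_mul_right ?_ (norm_sub_pos_iff.2 hxy)
  calc c * ‖x - y‖ * ‖x - y‖ = c * ‖x - y‖ ^ 2 := by ring
    _ ≤ ⟪F x - F y, x - y⟫ := hF x hx y hy
    _ ≤ ‖F x - F y‖ * ‖x - y‖ := real_inner_le_norm _ _

theorem inner_nonneg_of_norm_le (hF : StronglyMonotoneOn c F s) {x y : H} (hx : x ∈ s)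
    (hy : y ∈ s) (h : ‖F y‖ ≤ c * ‖x - y‖) : 0 ≤ ⟪F x, x - y⟫ := by
  have hxy := hF x hx y hy
  rw [inner_sub_left] at hxy
  have lower : -(‖F y‖ * ‖x - y‖) ≤ ⟪F y, x - y⟫ := neg_le_of_abs_le (abs_real_inner_le_norm _ _)
  have := mul_le_mul_of_nonneg_right h (norm_nonneg (x - y))
  linarith

theorem cauchySeq_of_tendsto {ι : Type*} [Nonempty ι] [SemilatticeSup ι]
    (hF : StronglyMonotoneOn c F s) (hc : 0 < c) {u : ι → H} (hu : ∀ᶠ i in atTop, u i ∈ s) {z : H}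
    (hz : Tendsto (fun i ↦ F (u i)) atTop (nhds z)) : CauchySeq u := by
  have hdist := (cauchySeq_iff_tendsto_dist_atTop_0.1 hz.cauchySeq).const_mul c⁻¹
  rw [mul_zero] at hdist
  refine cauchySeq_iff_tendsto_dist_atTop_0.2 (squeeze_zero' (.of_forall fun _ ↦ dist_nonneg) ?_
    hdist)
  rw [← prod_atTop_atTop_eq]
  filter_upwards [hu.prod_mk hu] with p hp
  rw [dist_eq_norm, dist_eq_norm, le_inv_mul_iff₀ hc]
  exact hF.mul_norm_sub_le hp.1 hp.2

theorem exists_zero_of_tendsto [CompleteSpace H] {ι : Type*} [Nonempty ι] [SemilatticeSup ι]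
    (hF : StronglyMonotoneOn c F s) (hc : 0 < c) (hs : IsClosed s) (hcont : ContinuousOn F s)
    {u : ι → H} (hu : ∀ᶠ i in atTop, u i ∈ s)
    (hz : Tendsto (fun i ↦ F (u i)) atTop (nhds 0)) :
    ∃ y ∈ s, Tendsto u atTop (nhds y) ∧ F y = 0 := by
  obtain ⟨y, hy⟩ := cauchySeq_tendsto_of_complete (hF.cauchySeq_of_tendsto hc hu hz)
  have hys : y ∈ s := hs.mem_of_tendsto hy hu
  exact ⟨y, hys, hy, tendsto_nhds_unique
    ((hcont y hys).tendsto.comp (tendsto_nhdsWithin_iff.2 ⟨hy, hu⟩)) hz⟩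

theorem norm_sub_le_mul_exp (hF : StronglyMonotoneOn c F s) {u v : ℝ → H}
    (hu : IsIntegralCurveOn u (fun _ x ↦ -F x) (Ici 0)) (hus : MapsTo u (Ici 0) s)
    (hv : IsIntegralCurveOn v (fun _ x ↦ -F x) (Ici 0)) (hvs : MapsTo v (Ici 0) s)
    {t : ℝ} (ht : 0 ≤ t) : ‖u t - v t‖ ≤ ‖u 0 - v 0‖ * Real.exp (-(c * t)) := by
  have hderiv (r : ℝ) (hr : r ∈ Ici 0) : HasDerivWithinAt (fun r ↦ ‖u r - v r‖ ^ 2)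
      (2 * ⟪u r - v r, -F (u r) - -F (v r)⟫) (Ici 0) r := ((hu r hr).sub (hv r hr)).norm_sq
  have gronwall : ‖u t - v t‖ ^ 2 ≤ gronwallBound (‖u 0 - v 0‖ ^ 2) (-2 * c) 0 (t - 0) := by
    refine le_gronwallBound_of_liminf_deriv_right_le (a := 0) (b := t)
      (fun r hr ↦ (hderiv r hr.1).continuousWithinAt.mono Icc_subset_Ici_self)
      (fun r hr _ ↦ ((hderiv r hr.1).mono (Ici_subset_Ici.2 hr.1)).liminf_right_slope_le)
      le_rfl (fun r hr ↦ ?_) t (right_mem_Icc.2 ht)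
    have := hF _ (hus hr.1) _ (hvs hr.1)
    rw [neg_sub_neg, ← neg_sub (F (u r)), inner_neg_right, real_inner_comm]
    linarith
  have hexp : Real.exp (-2 * c * t) = Real.exp (-(c * t)) ^ 2 := by
    rw [← Real.exp_nat_mul]
    congr 1
    push_cast
    ring
  rw [gronwallBound_ε0, sub_zero, hexp, ← mul_pow] at gronwall
  exact le_of_sq_le_sq gronwall (by positivity)

theorem norm_apply_le_mul_exp (hF : StronglyMonotoneOn c F s) {u : ℝ → H}
    (hu : IsIntegralCurveOn u (fun _ x ↦ -F x) (Ici 0)) (hus : MapsTo u (Ici 0) s)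
    {t : ℝ} (ht : 0 ≤ t) : ‖F (u t)‖ ≤ ‖F (u 0)‖ * Real.exp (-(c * t)) := by
  have add_mem {h : ℝ} (hh : 0 ≤ h) : ∀ r ∈ Ici (0 : ℝ), r + h ∈ Ici (0 : ℝ) := fun r hr ↦
    mem_Ici.2 (add_nonneg hr hh)
  have shift {h : ℝ} (hh : 0 ≤ h) :
      IsIntegralCurveOn (fun r ↦ u (r + h)) (fun _ x ↦ -F x) (Ici 0) :=
    (hu.comp_add h).mono fun r hr ↦ mem_vadd_set_iff_neg_vadd_mem.2 <| by
      simpa [add_comm] using add_mem hh r hr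
  have hshift_le (h : ℝ) (hh : h > 0) :
      ‖u (h + t) - u (0 + t)‖ ≤ Real.exp (-(c * t)) * ‖u h - u 0‖ := by
    simpa [add_comm, mul_comm] using hF.norm_sub_le_mul_exp (shift hh.le)
      (fun r hr ↦ hus (add_mem hh.le r hr)) hu hus ht
  simpa [mul_comm] using norm_le_mul_norm_of_hasDerivWithinAt_Ici
    (shift ht 0 self_mem_Ici) (hu 0 self_mem_Ici) hshift_le

end StronglyMonotoneOn

end StronglyMonotone

theorem continuous_simple_iterations_method_general
    {H : Type*} [NormedAddCommGroup H] [InnerProductSpace ℝ H] [CompleteSpace H]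
    {F : H → H} {u₀ : H} {R c₁ : ℝ} {K : NNReal} (hR : 0 < R) (hc₁ : 0 < c₁)
    (hlip : LipschitzOnWith K F (Metric.closedBall u₀ R))
    (hmono : StronglyMonotoneOn c₁ F (Metric.closedBall u₀ R))
    (hsmall : c₁⁻¹ * ‖F u₀‖ ≤ R) :
    ∃ u : ℝ → H, u 0 = u₀ ∧
      (∀ t ≥ (0 : ℝ), HasDerivAt u (-F (u t)) t) ∧
      (∀ t ≥ (0 : ℝ), u t ∈ Metric.closedBall u₀ R) ∧
      ∃ y : H, Tendsto u atTop (nhds y) ∧ F y = 0 ∧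
        (∀ t ≥ (0 : ℝ), ‖F (u t)‖ ≤ ‖F u₀‖ * Real.exp (-(c₁ * t))) ∧
        (∀ t ≥ (0 : ℝ), ‖u t - y‖ ≤ c₁⁻¹ * ‖F u₀‖ * Real.exp (-(c₁ * t))) := by
  have hu₀ := Metric.mem_closedBall_self (x := u₀) hR.le
  have hinward : ∀ x ∈ Metric.sphere u₀ R, ⟪x - u₀, -F x⟫ ≤ 0 := fun x hx ↦ by
    rw [inner_neg_right, real_inner_comm, neg_nonpos]
    refine hmono.inner_nonneg_of_norm_le (Metric.sphere_subset_closedBall hx) hu₀ ?_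
    rwa [mem_sphere_iff_norm.1 hx, ← inv_mul_le_iff₀ hc₁]
  obtain ⟨u, rfl, hu⟩ := exists_hasDerivAt_mem_closedBall hR hlip.neg hinward hu₀
  have hdecay (t : ℝ) (ht : t ≥ 0) : ‖F (u t)‖ ≤ ‖F (u 0)‖ * Real.exp (-(c₁ * t)) :=
    hmono.norm_apply_le_mul_exp (fun s hs ↦ (hu s hs).1.hasDerivWithinAt)
      (fun s hs ↦ (hu s hs).2) ht
  have htendsto : Tendsto (fun t ↦ F (u t)) atTop (nhds 0) :=
    squeeze_zero_norm' ((eventually_ge_atTop 0).mono hdecay) <| by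
      simpa using (Real.tendsto_exp_neg_atTop_nhds_zero.comp
        (tendsto_id.const_mul_atTop hc₁)).const_mul ‖F (u 0)‖
  obtain ⟨y, hy, hlim, hzero⟩ := hmono.exists_zero_of_tendsto hc₁ Metric.isClosed_closedBall
    hlip.continuousOn ((eventually_ge_atTop 0).mono fun t ht ↦ (hu t ht).2) htendsto
  refine ⟨u, rfl, fun t ht ↦ (hu t ht).1, fun t ht ↦ (hu t ht).2, y, hlim, hzero, hdecay,
    fun t ht ↦ ?_⟩
  rw [mul_assoc, le_inv_mul_iff₀ hc₁]
  calc c₁ * ‖u t - y‖ ≤ ‖F (u t) - F y‖ := hmono.mul_norm_sub_le (hu t ht).2 hy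
    _ = ‖F (u t)‖ := by rw [hzero, sub_zero]
    _ ≤ ‖F (u 0)‖ * Real.exp (-(c₁ * t)) := hdecay t ht

/-- **Example 2: continuous simple iterations method.** If `⟨F′(u)h, h⟩ ≥ c₁‖h‖²`
on `B`, `‖F″(u)‖ ≤ M₂` on `B`, and `c₁⁻¹‖F(u₀)‖ ≤ R`, then `u̇ = −F(u)`,
`u(0) = u₀` has a global solution in `B` converging to a zero `y` of `F`, with
`‖F(u(t))‖ ≤ ‖F(u₀)‖e^{−c₁t}` and `‖u(t) − y‖ ≤ c₁⁻¹‖F(u₀)‖e^{−c₁t}`. -/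
theorem continuous_simple_iterations_method
    {H : Type*} [NormedAddCommGroup H] [InnerProductSpace ℝ H] [CompleteSpace H]
    (F : H → H) (F' : H → H →L[ℝ] H) (F'' : H → H →L[ℝ] H →L[ℝ] H)
    (hF' : ∀ u : H, HasFDerivAt F (F' u) u)
    (hF'' : ∀ u : H, HasFDerivAt F' (F'' u) u)
    (u₀ : H) (R M₂ c₁ : ℝ) (hR : 0 < R) (hc₁ : 0 < c₁)
    (B : Set H) (hB : B = {u : H | ‖u - u₀‖ ≤ R})
    (hM₂ : ∀ u ∈ B, ‖F'' u‖ ≤ M₂)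
    (hmono : ∀ u ∈ B, ∀ h : H, ⟪F' u h, h⟫ ≥ c₁ * ‖h‖ ^ 2)
    (hsmall : c₁⁻¹ * ‖F u₀‖ ≤ R) :
    ∃ u : ℝ → H, u 0 = u₀ ∧
      (∀ t ≥ (0:ℝ), HasDerivAt u (-F (u t)) t) ∧
      (∀ t ≥ (0:ℝ), u t ∈ B) ∧
      ∃ y : H, Tendsto u atTop (nhds y) ∧ F y = 0 ∧
        (∀ t ≥ (0:ℝ), ‖F (u t)‖ ≤ ‖F u₀‖ * Real.exp (-(c₁ * t))) ∧
        (∀ t ≥ (0:ℝ), ‖u t - y‖ ≤ c₁⁻¹ * ‖F u₀‖ * Real.exp (-(c₁ * t))) := by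
  obtain rfl : B = Metric.closedBall u₀ R := by simp only [hB, Metric.closedBall, dist_eq_norm]
  obtain ⟨K, hK⟩ := exists_lipschitzOnWith_of_norm_second_hasFDerivWithinAt_le
    (convex_closedBall u₀ R) Metric.isBounded_closedBall
    (fun x _ ↦ (hF' x).hasFDerivWithinAt) (fun x _ ↦ (hF'' x).hasFDerivWithinAt) hM₂
  exact continuous_simple_iterations_method_general hR hc₁ hK
    (stronglyMonotoneOn_of_hasFDerivWithinAt (convex_closedBall u₀ R)
      (fun x _ ↦ (hF' x).hasFDerivWithinAt) hmono) hsmall
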